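/- Deterministic asymptotics of the conjugate MAP: let β, μ₀ ∈ ℝ^p be unit vectors, κ₀ ≥ 0, c > 0, (σ_n) a positive sequence with σ_n → 0, (K_n) a positive sequence with σ_n K_n → c, and (β_n) a sequence of unit vectors with σ_n^{-1}(β_n − β) → 0. Define β_n^c = (K_n β_n + κ₀ μ₀)/‖K_n β_n + κ₀ μ₀‖₂. Then σ_n^{-1}(β_n^c − β) → (κ₀/c)(μ₀ − ⟨μ₀, β⟩β). -/

import Mathlib

open scoped RealInnerProductSpace
open Filter Topology

/-! Since `K n > 0`, dividing by `K n` before normalizing changes nothing: the estimator is the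
normalization of `βn n + (κ₀ / K n) • μ₀`. As `(σ n)⁻¹ * (κ₀ / K n) → κ₀ / c`, the deviation of
this vector from `β` has rescaled limit `(κ₀ / c) • μ₀`. The delta method transports the limit
through the derivative of the normalization map at `β`, which for a unit vector is the orthogonal
projection onto `βᗮ`. -/

section RescaledDeviation

variable {𝕜 E ι : Type*} [NormedField 𝕜] [NormedAddCommGroup E] [NormedSpace 𝕜 E]
  {l : Filter ι} {σ : ι → 𝕜} {xn : ι → E} {x v : E}

lemma tendsto_sub_of_tendsto_inv_smul_sub (hσ : Tendsto σ l (𝓝 0)) (hσ₀ : ∀ᶠ i in l, σ i ≠ 0)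
    (hx : Tendsto (fun i => (σ i)⁻¹ • (xn i - x)) l (𝓝 v)) :
    Tendsto (fun i => xn i - x) l (𝓝 0) := by
  have hlim := hσ.smul hx
  rw [zero_smul] at hlim
  refine hlim.congr' ?_
  filter_upwards [hσ₀] with i hi
  exact smul_inv_smul₀ hi _

lemma tendsto_inv_smul_add_div_smul_sub {K : ι → 𝕜} {c : 𝕜} (hc : c ≠ 0)
    (hσK : Tendsto (fun i => σ i * K i) l (𝓝 c))
    (hx : Tendsto (fun i => (σ i)⁻¹ • (xn i - x)) l (𝓝 v)) (κ : 𝕜) (μ : E) :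
    Tendsto (fun i => (σ i)⁻¹ • (xn i + (κ / K i) • μ - x)) l (𝓝 (v + (κ / c) • μ)) := by
  have hcoeff : Tendsto (fun i => (σ i)⁻¹ * (κ / K i)) l (𝓝 (κ / c)) :=
    (tendsto_const_nhds.div hσK hc).congr fun i => by
      simp only [Pi.div_apply, div_eq_mul_inv, mul_inv, mul_left_comm]
  refine (hx.add (hcoeff.smul_const μ)).congr fun i => ?_
  rw [mul_smul, ← smul_add, sub_add_eq_add_sub]

end RescaledDeviation

theorem tendsto_inv_smul_sub_of_hasFDerivAt {𝕜 E F ι : Type*} [NontriviallyNormedField 𝕜]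
    [NormedAddCommGroup E] [NormedSpace 𝕜 E] [NormedAddCommGroup F] [NormedSpace 𝕜 F]
    {l : Filter ι} {σ : ι → 𝕜} {xn : ι → E} {x v : E} {f : E → F} {f' : E →L[𝕜] F}
    (hf : HasFDerivAt f f' x) (hσ : Tendsto σ l (𝓝 0)) (hσ₀ : ∀ᶠ i in l, σ i ≠ 0)
    (hx : Tendsto (fun i => (σ i)⁻¹ • (xn i - x)) l (𝓝 v)) :
    Tendsto (fun i => (σ i)⁻¹ • (f (xn i) - f x)) l (𝓝 (f' v)) := by
  simpa only [add_sub_cancel] using hf.hasFDerivWithinAt.lim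
    (tendsto_sub_of_tendsto_inv_smul_sub hσ hσ₀ hx) (.of_forall fun _ => Set.mem_univ _) hx

section Normalize

variable {E : Type*} [NormedAddCommGroup E] [InnerProductSpace ℝ E] {x : E}

theorem hasStrictFDerivAt_norm (hx : x ≠ 0) :
    HasStrictFDerivAt (fun y : E => ‖y‖) (‖x‖⁻¹ • innerSL ℝ x) x := by
  have hsqrt := (hasStrictFDerivAt_norm_sq x).sqrt (pow_ne_zero 2 (norm_ne_zero_iff.mpr hx))
  simp only [Real.sqrt_sq (norm_nonneg _)] at hsqrt
  convert! hsqrt using 1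
  module

theorem hasStrictFDerivAt_normalize (hx : x ≠ 0) :
    HasStrictFDerivAt NormedSpace.normalize (‖x‖⁻¹ • (ℝ ∙ x)ᗮ.starProjection) x := by
  have hnorm : ‖x‖ ≠ 0 := norm_ne_zero_iff.mpr hx
  have hinv : HasStrictFDerivAt (fun y : E => ‖y‖⁻¹)
      (-(‖x‖ ^ 2)⁻¹ • ‖x‖⁻¹ • innerSL ℝ x) x :=
    (hasStrictDerivAt_inv hnorm).comp_hasStrictFDerivAt x (hasStrictFDerivAt_norm hx)
  refine (hinv.smul (hasStrictFDerivAt_id x)).congr_fderiv ?_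
  ext w
  have hproj : (ℝ ∙ x)ᗮ.starProjection w = w - (⟪x, w⟫ / ‖x‖ ^ 2) • x := by
    rw [Submodule.starProjection_orthogonal_val, Submodule.starProjection_singleton]
    rfl
  simp only [neg_smul, id_eq, add_apply, smul_apply, ContinuousLinearMap.id_apply,
    ContinuousLinearMap.smulRight_apply, neg_apply, coe_innerSL_apply, smul_eq_mul, hproj]
  module

end Normalize

theorem stmt9_general {E ι : Type*} [NormedAddCommGroup E] [InnerProductSpace ℝ E]
    {l : Filter ι} {β v : E} (hβ : β ≠ 0) (μ₀ : E) (κ₀ : ℝ) {c : ℝ} (hc : c ≠ 0)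
    {σ K : ι → ℝ} (hK : ∀ᶠ i in l, 0 < K i) (hσ : Tendsto σ l (𝓝 0))
    (hσK : Tendsto (fun i => σ i * K i) l (𝓝 c)) {βn : ι → E}
    (hβn : Tendsto (fun i => (σ i)⁻¹ • (βn i - β)) l (𝓝 v)) :
    Tendsto (fun i => (σ i)⁻¹ • (NormedSpace.normalize (K i • βn i + κ₀ • μ₀) -
      NormedSpace.normalize β)) l
      (𝓝 (‖β‖⁻¹ • (ℝ ∙ β)ᗮ.starProjection (v + (κ₀ / c) • μ₀))) := by
  have hσ₀ : ∀ᶠ i in l, σ i ≠ 0 := (hσK.eventually_ne hc).mono fun _ => left_ne_zero_of_mul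
  refine (tendsto_inv_smul_sub_of_hasFDerivAt (hasStrictFDerivAt_normalize hβ).hasFDerivAt hσ hσ₀
    (tendsto_inv_smul_add_div_smul_sub hc hσK hβn κ₀ μ₀)).congr' ?_
  filter_upwards [hK] with i hi
  have hscale : K i • βn i + κ₀ • μ₀ = K i • (βn i + (κ₀ / K i) • μ₀) := by
    rw [smul_add, smul_smul, mul_div_cancel₀ κ₀ hi.ne']
  rw [hscale, NormedSpace.normalize_smul_of_pos hi]

theorem stmt9 {p : ℕ} (β μ₀ : EuclideanSpace ℝ (Fin p)) (hβ : ‖β‖ = 1) (hμ₀ : ‖μ₀‖ = 1)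
    (κ₀ : ℝ) (hκ₀ : 0 ≤ κ₀) (c : ℝ) (hc : 0 < c)
    (σ K : ℕ → ℝ) (hσpos : ∀ n, 0 < σ n) (hKpos : ∀ n, 0 < K n)
    (hσ : Tendsto σ atTop (𝓝 0))
    (hσK : Tendsto (fun n => σ n * K n) atTop (𝓝 c))
    (βn : ℕ → EuclideanSpace ℝ (Fin p)) (hβn : ∀ n, ‖βn n‖ = 1)
    (hβconv : Tendsto (fun n => (σ n)⁻¹ • (βn n - β)) atTop (𝓝 0)) :
    Tendsto
      (fun n => (σ n)⁻¹ •
        (‖K n • βn n + κ₀ • μ₀‖⁻¹ • (K n • βn n + κ₀ • μ₀) - β)) atTop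
      (𝓝 ((κ₀ / c) • (μ₀ - ⟪μ₀, β⟫ • β))) := by
  have hβ₀ : β ≠ 0 := norm_ne_zero_iff.mp (hβ ▸ one_ne_zero)
  simpa only [NormedSpace.normalize, hβ, inv_one, one_smul, zero_add, map_smul,
    Submodule.starProjection_orthogonal_val, Submodule.starProjection_unit_singleton ℝ hβ,
    real_inner_comm β μ₀] using
    stmt9_general hβ₀ μ₀ κ₀ hc.ne' (.of_forall hKpos) hσ hσK hβconv
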